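/- Let η > 0, let u, v ∈ [1/2, 1 − √η], and let w ∈ [0,1]. If (1−v)/v ≥ ((1−u)/u)·e^w, then u − v ≥ (1/2)·w·√η. -/

import Mathlib

theorem one_sub_mul_mul_sub_one_le_sub_of_div_mul_le_div {K : Type*} [Field K] [LinearOrder K]
    [IsStrictOrderedRing K] {u v r : K} (hu : 0 < u) (hv : 0 < v)
    (h : (1 - u) / u * r ≤ (1 - v) / v) :
    (1 - u) * v * (r - 1) ≤ u - v := by
  have cleared : (1 - u) * r * v ≤ (1 - v) * u := by
    rwa [div_mul_eq_mul_div, div_le_div_iff₀ hu hv] at h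
  calc (1 - u) * v * (r - 1) = (1 - u) * r * v - (1 - u) * v := by ring
    _ ≤ (1 - v) * u - (1 - u) * v := sub_le_sub_right cleared _
    _ = u - v := by ring

theorem ratio_ineq_lower_general {c s u v w : ℝ} (hc : 0 < c) (hs : 0 ≤ s)
    (hu : u ∈ Set.Ioc 0 (1 - s)) (hv : c ≤ v) (hw : 0 ≤ w)
    (h : (1 - u) / u * Real.exp w ≤ (1 - v) / v) :
    c * w * s ≤ u - v := by
  have hv₀ : 0 < v := hc.trans_le hv
  have hsu : s ≤ 1 - u := le_sub_comm.mp hu.2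
  have hu₁ : 0 ≤ 1 - u := hs.trans hsu
  calc c * w * s = s * c * w := by ring
    _ ≤ (1 - u) * v * w := by gcongr
    _ ≤ (1 - u) * v * (Real.exp w - 1) := by
      gcongr
      exact le_sub_iff_add_le.mpr (Real.add_one_le_exp w)
    _ ≤ u - v := one_sub_mul_mul_sub_one_le_sub_of_div_mul_le_div hu.1 hv₀ h

/-- If `u, v ∈ [1/2, 1 − √η]`, `w ∈ [0,1]` and `(1−v)/v ≥ ((1−u)/u)·e^w`,
then `u − v ≥ (1/2)·w·√η`. -/
theorem ratio_ineq_lower (η u v w : ℝ) (hη : 0 < η)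
    (hu : u ∈ Set.Icc (1/2 : ℝ) (1 - Real.sqrt η))
    (hv : v ∈ Set.Icc (1/2 : ℝ) (1 - Real.sqrt η))
    (hw : w ∈ Set.Icc (0 : ℝ) 1)
    (h : (1 - v) / v ≥ (1 - u) / u * Real.exp w) :
    u - v ≥ (1/2) * w * Real.sqrt η :=
  ratio_ineq_lower_general one_half_pos (Real.sqrt_nonneg η)
    ⟨one_half_pos.trans_le hu.1, hu.2⟩ hv.1 hw.1 h
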